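/- arXiv:math/0505206 — 2 statements merged into one kernel-verified Lean document; each statement's English description precedes it below -/
import Mathlib

section
/- Let R = ℤ[t, t⁻¹] be the ring of Laurent polynomials with integer coefficients. The R-module (R/(2t − 1)) × (R/(t − 2)) is not isomorphic, as an R-module, to the cyclic R-module R/((2t − 1)(t − 2)). -/
open LaurentPolynomial

/-- The `ℤ[t,t⁻¹]`-module `(ℤ[t,t⁻¹]/(2t−1)) × (ℤ[t,t⁻¹]/(t−2))` is not isomorphic to
the cyclic module `ℤ[t,t⁻¹]/((2t−1)(t−2))`. -/
theorem stmt_1 :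
    ¬ Nonempty
      ((((LaurentPolynomial ℤ) ⧸ Ideal.span {(2 * T 1 - 1 : LaurentPolynomial ℤ)}) ×
        ((LaurentPolynomial ℤ) ⧸ Ideal.span {(T 1 - 2 : LaurentPolynomial ℤ)}))
        ≃ₗ[LaurentPolynomial ℤ]
       ((LaurentPolynomial ℤ) ⧸
          Ideal.span {((2 * T 1 - 1) * (T 1 - 2) : LaurentPolynomial ℤ)})) := by
  rintro ⟨e⟩
  -- evaluation at `t = -1` in `ZMod 3` kills both `2t - 1` and `t - 2`
  let ev : LaurentPolynomial ℤ →+* ZMod 3 := eval₂ (Int.castRingHom (ZMod 3)) (-1)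
  have hT : ev (T 1) = -1 := by
    have := eval₂_T (Int.castRingHom (ZMod 3)) (-1) 1
    exact this.trans (by simp)
  have h1 : ∀ x y : LaurentPolynomial ℤ,
      Ideal.Quotient.mk (Ideal.span {(2 * T 1 - 1 : LaurentPolynomial ℤ)}) x =
        Ideal.Quotient.mk _ y → ev x = ev y := by
    intro x y h
    rw [Ideal.Quotient.eq, Ideal.mem_span_singleton] at h
    obtain ⟨c, hc⟩ := h
    have h0 : ev (2 * T 1 - 1) = 0 := by
      rw [map_sub, map_mul, hT, map_ofNat, map_one]; decide
    rw [← sub_eq_zero, ← map_sub, hc, map_mul, h0, zero_mul]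
  have h2 : ∀ x y : LaurentPolynomial ℤ,
      Ideal.Quotient.mk (Ideal.span {(T 1 - 2 : LaurentPolynomial ℤ)}) x =
        Ideal.Quotient.mk _ y → ev x = ev y := by
    intro x y h
    rw [Ideal.Quotient.eq, Ideal.mem_span_singleton] at h
    obtain ⟨c, hc⟩ := h
    have h0 : ev (T 1 - 2) = 0 := by
      rw [map_sub, hT, map_ofNat]; decide
    rw [← sub_eq_zero, ← map_sub, hc, map_mul, h0, zero_mul]
  -- a generator of the product
  have hgen : ∀ z, ∃ r : LaurentPolynomial ℤ, r • e.symm 1 = z := by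
    intro z
    obtain ⟨r, hr⟩ := Ideal.Quotient.mk_surjective (e z)
    refine ⟨r, ?_⟩
    rw [← map_smul, LinearEquiv.symm_apply_eq, ← hr]
    exact congrArg (Ideal.Quotient.mk _) (mul_one r)
  obtain ⟨⟨a, b⟩, hg⟩ : ∃ g, g = e.symm 1 := ⟨_, rfl⟩
  rw [← hg] at hgen
  obtain ⟨a, rfl⟩ := Ideal.Quotient.mk_surjective a
  obtain ⟨b, rfl⟩ := Ideal.Quotient.mk_surjective b
  obtain ⟨r, hr⟩ := hgen (1, 0)
  obtain ⟨s, hs⟩ := hgen (0, 1)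
  have r1 := h1 (r * a) 1 (congrArg Prod.fst hr)
  have r2 := h2 (r * b) 0 (congrArg Prod.snd hr)
  have s2 := h2 (s * b) 1 (congrArg Prod.snd hs)
  rw [map_mul, map_one] at r1 s2
  rw [map_mul, map_zero] at r2
  generalize ev r = r' at *
  generalize ev s = s' at *
  generalize ev a = a' at *
  generalize ev b = b' at *
  revert r' s' a' b'
  decide
end

section
/- Let Y be a topological space, f : Y ≃ₜ Y a homeomorphism, and P ⊆ Y a subset such that f(P) ⊆ interior(P). Define X = P \ interior(f(P)). Then ⋃_{k ≥ 0} f^k(X) = P \ (⋂_{k ≥ 1} interior(f^k(P))). -/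
/-- If `f : Y ≃ₜ Y` satisfies `f(P) ⊆ interior P` and `X = P \ interior (f(P))`, then
`⋃_{k ≥ 0} f^k(X) = P \ (⋂_{k ≥ 1} interior (f^k(P)))`. -/
theorem stmt_6 (Y : Type*) [TopologicalSpace Y] (f : Y ≃ₜ Y) (P : Set Y)
    (hP : f '' P ⊆ interior P)
    (X : Set Y) (hX : X = P \ interior (f '' P)) :
    (⋃ k : ℕ, (f.toEquiv ^ k) '' X) =
      P \ (⋂ k : ℕ, interior ((f.toEquiv ^ (k + 1)) '' P)) := by
  have hs : ∀ (k : ℕ) (S : Set Y),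
      (f.toEquiv ^ (k + 1)) '' S = f '' ((f.toEquiv ^ k) '' S) := by
    intro k S
    rw [pow_succ', Set.image_image]
    rfl
  have h0 : ∀ S : Set Y, (f.toEquiv ^ (0 : ℕ)) '' S = S := by
    intro S
    simp
  have hX' : ∀ k : ℕ, (f.toEquiv ^ k) '' X =
      ((f.toEquiv ^ k) '' P) \ interior ((f.toEquiv ^ (k + 1)) '' P) := by
    intro k
    induction k with
    | zero => rw [hs, h0, h0, hX]
    | succ k ih =>
      rw [hs k X, ih, Set.image_sdiff f.injective, f.image_interior, ← hs, ← hs]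
  have hsub : ∀ k : ℕ, (f.toEquiv ^ k) '' P ⊆ P := by
    intro k
    induction k with
    | zero => rw [h0]
    | succ k ih =>
      rw [hs]
      exact (Set.image_mono ih).trans (hP.trans interior_subset)
  ext x
  simp only [Set.mem_iUnion, hX', Set.mem_sdiff, Set.mem_iInter]
  constructor
  · rintro ⟨k, hk, hk'⟩
    exact ⟨hsub k hk, fun h => hk' (h k)⟩
  · rintro ⟨hx, h⟩
    by_contra! hc
    have key : ∀ k : ℕ, x ∈ (f.toEquiv ^ k) '' P := by
      intro k
      induction k with
      | zero => rw [h0]; exact hx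
      | succ k ih => exact interior_subset (hc k ih)
    exact h fun k => hc k (key k)
end
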